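/- arXiv:2308.08858 — 2 statements merged into one kernel-verified Lean document; each statement's English description precedes it below -/
import Mathlib

section
/- Let H ≥ 1 be an integer and define e₁ = H, e_{i+1} = ⌊(1+1/H)e_i⌋ for i ≥ 1. Then for any positive integers j and T with j ≤ T: Σ over all z ≥ 2 such that j ≤ Σ_{i=1}^{z−1} e_i ≤ T of e_z/(Σ_{i=1}^{z−1} e_i) ≤ 2(log T + 1). -/
open Finset MeasureTheory

namespace ZSMG

/-! ## Stage structure of the stage-based algorithm -/

/-- Stage lengths (`0`-indexed): `stageLen H 0 = e₁ = H` and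
`stageLen H (i+1) = ⌊(1 + 1/H) * stageLen H i⌋`. -/
def stageLen (H : ℕ) : ℕ → ℕ
  | 0 => H
  | i + 1 => stageLen H i + stageLen H i / H

/-- Total number of visits contained in the first `m` stages. -/
def stageEnd (H m : ℕ) : ℕ := ∑ i ∈ Finset.range m, stageLen H i

/-- `n` is the ending index of some stage (the set `𝓛` of the paper). -/
def IsStageEnd (H n : ℕ) : Prop := ∃ m : ℕ, n = stageEnd H (m + 1)

/-- Index (0-based) of the stage containing the `(n+1)`-st visit,
where `n` is the number of previous visits. -/
noncomputable def curStage (H n : ℕ) : ℕ := sInf {m | n < stageEnd H (m + 1)}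

/-- `ň`: the number of visits in the stage immediately preceding the current stage. -/
noncomputable def checkCnt (H n : ℕ) : ℕ :=
  if curStage H n = 0 then 0 else stageLen H (curStage H n - 1)

/-- `n`: the number of visits in all completed stages. -/
noncomputable def globCnt (H n : ℕ) : ℕ := stageEnd H (curStage H n)

/-- a probability vector on the finite type `α`. -/
def IsProbVec {α : Type*} [Fintype α] (p : α → ℝ) : Prop :=
  (∀ i, 0 ≤ p i) ∧ ∑ i, p i = 1

/-! ## Visit counting along a trajectory -/

section Counts

variable {S A B : Type*} [DecidableEq S] [DecidableEq A] [DecidableEq B]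

/-- `N_h^k(s,a,b)`: the number of visits to `y = (s,a,b)` at step `h`
before episode `k`. -/
def Nvis (x : ℕ → ℕ → S × A × B) (h k : ℕ) (y : S × A × B) : ℕ :=
  ((Finset.Ico 1 k).filter fun j => x j h = y).card

/-- `n_h^k(s)`: the number of visits to the state `s` at step `h` before episode `k`. -/
def NvisS {σ : Type*} [DecidableEq σ] (st : ℕ → ℕ → σ) (h k : ℕ) (s : σ) : ℕ :=
  ((Finset.Ico 1 k).filter fun j => st j h = s).card

/-- the episode of the `i`-th (1-based) visit to `y` at step `h`. -/
noncomputable def visitEp (x : ℕ → ℕ → S × A × B) (h : ℕ) (y : S × A × B) (i : ℕ) : ℕ :=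
  sInf {j | x j h = y ∧ Nvis x h j y = i - 1}

/-- `n_h^k` for the triple visited at step `h` of episode `k`. -/
noncomputable def nGlob (x : ℕ → ℕ → S × A × B) (H h k : ℕ) : ℕ :=
  globCnt H (Nvis x h k (x k h))

/-- `ň_h^k` for the triple visited at step `h` of episode `k`. -/
noncomputable def nCheck (x : ℕ → ℕ → S × A × B) (H h k : ℕ) : ℕ :=
  checkCnt H (Nvis x h k (x k h))

/-- `ℓ_{h,i}^k`: the episode of the `i`-th visit (among all episodes) to the triple
visited at step `h` of episode `k`. -/
noncomputable def ell (x : ℕ → ℕ → S × A × B) (h k i : ℕ) : ℕ := visitEp x h (x k h) i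

/-- `ℓ̌_{h,i}^k` relative to an arbitrary triple `y`. -/
noncomputable def ellCheckAt (x : ℕ → ℕ → S × A × B) (H h k : ℕ) (y : S × A × B) (i : ℕ) : ℕ :=
  visitEp x h y (stageEnd H (curStage H (Nvis x h k y) - 1) + i)

/-- `ℓ̌_{h,i}^k`: the episode of the `i`-th visit, in the stage immediately preceding the
current stage, to the triple visited at step `h` of episode `k`. -/
noncomputable def ellCheck (x : ℕ → ℕ → S × A × B) (H h k i : ℕ) : ℕ :=
  ellCheckAt x H h k (x k h) i

end Counts

/-! ## Values of Markov games -/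

section Game

variable {S A B : Type*} [Fintype S] [Fintype A] [Fintype B]

/-- `Pm h s a b` is a transition probability vector for every `(h,s,a,b)`. -/
def IsTransKernel (Pm : ℕ → S → A → B → S → ℝ) : Prop := ∀ h s a b, IsProbVec (Pm h s a b)

/-- `𝕍(p, f) = pᵀ (f²) - (pᵀ f)²`. -/
def Vvar (p f : S → ℝ) : ℝ := (∑ s, p s * f s ^ 2) - (∑ s, p s * f s) ^ 2

/-- `(P_h f)(s,a,b) = E_{s' ~ P_h(·|s,a,b)} [f s']`. -/
def Pexp (Pm : ℕ → S → A → B → S → ℝ) (h : ℕ) (s : S) (a : A) (b : B) (f : S → ℝ) : ℝ :=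
  ∑ s', Pm h s a b s' * f s'

/-- coarse correlated equilibrium of the pair of matrices `(Qu, Ql)`. -/
def IsCCE (pi Qu Ql : A → B → ℝ) : Prop :=
  IsProbVec (fun ab : A × B => pi ab.1 ab.2) ∧
  (∀ a' : A, ∑ a, ∑ b, pi a b * Qu a' b ≤ ∑ a, ∑ b, pi a b * Qu a b) ∧
  (∀ b' : B, ∑ a, ∑ b, pi a b * Ql a b ≤ ∑ a, ∑ b, pi a b * Ql a b')

/-- value of the correlated Markov policy `pol` with `t` steps remaining
(so at step `H - t + 1`). -/
noncomputable def VpiAux (H : ℕ) (Pm : ℕ → S → A → B → S → ℝ) (r : ℕ → S → A → B → ℝ)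
    (pol : ℕ → S → A → B → ℝ) : ℕ → S → ℝ
  | 0, _ => 0
  | t + 1, s => ∑ a, ∑ b, pol (H - t) s a b *
      (r (H - t) s a b + ∑ s', Pm (H - t) s a b s' * VpiAux H Pm r pol t s')

/-- `V_h^π(s)` for a correlated Markov policy `π`. -/
noncomputable def Vpi (H : ℕ) (Pm : ℕ → S → A → B → S → ℝ) (r : ℕ → S → A → B → ℝ)
    (pol : ℕ → S → A → B → ℝ) (h : ℕ) (s : S) : ℝ := VpiAux H Pm r pol (H + 1 - h) s

/-- `Q_h^π(s,a,b)` for a correlated Markov policy `π`. -/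
noncomputable def Qpi (H : ℕ) (Pm : ℕ → S → A → B → S → ℝ) (r : ℕ → S → A → B → ℝ)
    (pol : ℕ → S → A → B → ℝ) (h : ℕ) (s : S) (a : A) (b : B) : ℝ :=
  r h s a b + ∑ s', Pm h s a b s' * Vpi H Pm r pol (h + 1) s'

/-- Nash value with `t` steps remaining. -/
noncomputable def VstarAux (H : ℕ) (Pm : ℕ → S → A → B → S → ℝ)
    (r : ℕ → S → A → B → ℝ) : ℕ → S → ℝ
  | 0, _ => 0
  | t + 1, s =>
      ⨆ p ∈ {p : A → ℝ | IsProbVec p}, ⨅ q ∈ {q : B → ℝ | IsProbVec q},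
        ∑ a, ∑ b, p a * q b *
          (r (H - t) s a b + ∑ s', Pm (H - t) s a b s' * VstarAux H Pm r t s')

/-- `V_h^*`: the Nash equilibrium value function. -/
noncomputable def Vstar (H : ℕ) (Pm : ℕ → S → A → B → S → ℝ) (r : ℕ → S → A → B → ℝ)
    (h : ℕ) (s : S) : ℝ := VstarAux H Pm r (H + 1 - h) s

/-- `Q_h^*`: the Nash equilibrium action-value function. -/
noncomputable def Qstar (H : ℕ) (Pm : ℕ → S → A → B → S → ℝ) (r : ℕ → S → A → B → ℝ)
    (h : ℕ) (s : S) (a : A) (b : B) : ℝ :=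
  r h s a b + ∑ s', Pm h s a b s' * Vstar H Pm r (h + 1) s'

/-- value of a pair of general (history-dependent) policies, with `t` steps remaining;
the history is the reversed list of the previously visited `(s,a,b)` triples. -/
noncomputable def VgenAux (H : ℕ) (Pm : ℕ → S → A → B → S → ℝ) (r : ℕ → S → A → B → ℝ)
    (mu : List (S × A × B) → S → A → ℝ) (nu : List (S × A × B) → S → B → ℝ) :
    ℕ → List (S × A × B) → S → ℝ
  | 0, _, _ => 0
  | t + 1, hist, s => ∑ a, ∑ b, mu hist s a * nu hist s b *
      (r (H - t) s a b + ∑ s', Pm (H - t) s a b s' * VgenAux H Pm r mu nu t ((s, a, b) :: hist) s')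

/-- `V₁^{μ,ν}(s)` for general policies `μ, ν`. -/
noncomputable def Vgen (H : ℕ) (Pm : ℕ → S → A → B → S → ℝ) (r : ℕ → S → A → B → ℝ)
    (mu : List (S × A × B) → S → A → ℝ) (nu : List (S × A × B) → S → B → ℝ) (s : S) : ℝ :=
  VgenAux H Pm r mu nu H [] s

/-- `V₁^{†,ν}(s) = sup_μ V₁^{μ,ν}(s)`: value of the best response against `ν`. -/
noncomputable def VdagNu (H : ℕ) (Pm : ℕ → S → A → B → S → ℝ) (r : ℕ → S → A → B → ℝ)
    (nu : List (S × A × B) → S → B → ℝ) (s : S) : ℝ :=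
  ⨆ mu ∈ {mu : List (S × A × B) → S → A → ℝ | ∀ hist s', IsProbVec (mu hist s')},
    Vgen H Pm r mu nu s

/-- `V₁^{μ,†}(s) = inf_ν V₁^{μ,ν}(s)`: value of `μ` against its best response. -/
noncomputable def VmuDag (H : ℕ) (Pm : ℕ → S → A → B → S → ℝ) (r : ℕ → S → A → B → ℝ)
    (mu : List (S × A × B) → S → A → ℝ) (s : S) : ℝ :=
  ⨅ nu ∈ {nu : List (S × A × B) → S → B → ℝ | ∀ hist s', IsProbVec (nu hist s')},
    Vgen H Pm r mu nu s

end Game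

/-! ## The certified policies of Algorithm 2 -/

section Certified

variable {S A B : Type*} [Fintype S] [Fintype A] [Fintype B]
  [DecidableEq S] [DecidableEq A] [DecidableEq B]

/-- Weight placed on episode `k` by the certified-policy construction after observing the
(reversed) history `hist`; `g k h y` is the probability that the policy of episode `k`
takes the relevant player's own action of `y` at step `h`. -/
noncomputable def certW (x : ℕ → ℕ → S × A × B) (H K : ℕ) (g : ℕ → ℕ → S × A × B → ℝ) :
    List (S × A × B) → ℕ → ℝ
  | [], k => if k ∈ Finset.Icc 1 K then (K : ℝ)⁻¹ else 0
  | y :: hist, k' =>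
      (∑ k ∈ Finset.Icc 1 K, certW x H K g hist k * g k (hist.length + 1) y *
          (Nvis x (hist.length + 1) k y : ℝ)⁻¹ *
          (((Finset.Icc 1 (Nvis x (hist.length + 1) k y)).filter
              fun j => ellCheckAt x H (hist.length + 1) k y j = k').card : ℝ)) /
        ∑ k ∈ Finset.Icc 1 K, certW x H K g hist k * g k (hist.length + 1) y

/-- `μ^out`: the certified policy of the max-player (Algorithm 2), as a general policy. -/
noncomputable def certMax (x : ℕ → ℕ → S × A × B) (H K : ℕ)
    (pol : ℕ → ℕ → S → A → B → ℝ) : List (S × A × B) → S → A → ℝ := fun hist s a =>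
  ∑ k ∈ Finset.Icc 1 K,
    certW x H K (fun k' h' y => ∑ b, pol k' h' y.1 y.2.1 b) hist k *
      ∑ b, pol k (hist.length + 1) s a b

/-- `ν^out`: the certified policy of the min-player, as a general policy. -/
noncomputable def certMin (x : ℕ → ℕ → S × A × B) (H K : ℕ)
    (pol : ℕ → ℕ → S → A → B → ℝ) : List (S × A × B) → S → B → ℝ := fun hist s b =>
  ∑ k ∈ Finset.Icc 1 K,
    certW x H K (fun k' h' y => ∑ a, pol k' h' y.1 a y.2.2) hist k *
      ∑ a, pol k (hist.length + 1) s a b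

end Certified

/-! ## Data describing one run of Algorithm 1 -/

/-- All quantities maintained by Algorithm 1 along one run: the trajectory
`(s_h^k, a_h^k, b_h^k)`, the CCE policies `π_h^k`, and the optimistic/pessimistic
(action-)value and reference value functions, each indexed by
(episode, step); the value at episode `k` is the value at the *beginning* of episode `k`. -/
structure RunData (S A B : Type*) where
  st : ℕ → ℕ → S
  aa : ℕ → ℕ → A
  bb : ℕ → ℕ → B
  pol : ℕ → ℕ → S → A → B → ℝ
  Qup : ℕ → ℕ → S → A → B → ℝ
  Qlo : ℕ → ℕ → S → A → B → ℝ
  Vup : ℕ → ℕ → S → ℝ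
  Vlo : ℕ → ℕ → S → ℝ
  VrefUp : ℕ → ℕ → S → ℝ
  VrefLo : ℕ → ℕ → S → ℝ

namespace RunData

variable {S A B : Type*} [DecidableEq S] [DecidableEq A] [DecidableEq B] (R : RunData S A B)

/-- the trajectory of visited triples. -/
def x : ℕ → ℕ → S × A × B := fun k h => (R.st k h, R.aa k h, R.bb k h)

/-- `n_h^k`. -/
noncomputable def n (H h k : ℕ) : ℕ := nGlob R.x H h k

/-- `ň_h^k`. -/
noncomputable def nchk (H h k : ℕ) : ℕ := nCheck R.x H h k

/-- `ℓ_{h,i}^k`. -/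
noncomputable def L (h k i : ℕ) : ℕ := ell R.x h k i

/-- `ℓ̌_{h,i}^k`. -/
noncomputable def Lc (H h k i : ℕ) : ℕ := ellCheck R.x H h k i

/-- `v̌/ň` for the optimistic values. -/
noncomputable def vChkUp (H h k : ℕ) : ℝ :=
  (∑ i ∈ Finset.Icc 1 (R.nchk H h k),
    R.Vup (R.Lc H h k i) (h + 1) (R.st (R.Lc H h k i) (h + 1))) / (R.nchk H h k : ℝ)

/-- `v̌/ň` for the pessimistic values. -/
noncomputable def vChkLo (H h k : ℕ) : ℝ :=
  (∑ i ∈ Finset.Icc 1 (R.nchk H h k),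
    R.Vlo (R.Lc H h k i) (h + 1) (R.st (R.Lc H h k i) (h + 1))) / (R.nchk H h k : ℝ)

/-- `μ̄^ref/n`. -/
noncomputable def refMeanUp (H h k : ℕ) : ℝ :=
  (∑ i ∈ Finset.Icc 1 (R.n H h k),
    R.VrefUp (R.L h k i) (h + 1) (R.st (R.L h k i) (h + 1))) / (R.n H h k : ℝ)

/-- `μ̲^ref/n`. -/
noncomputable def refMeanLo (H h k : ℕ) : ℝ :=
  (∑ i ∈ Finset.Icc 1 (R.n H h k),
    R.VrefLo (R.L h k i) (h + 1) (R.st (R.L h k i) (h + 1))) / (R.n H h k : ℝ)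

/-- `ν̄^{ref} = σ̄^{ref}/n - (μ̄^{ref}/n)²`. -/
noncomputable def nuRefUp (H h k : ℕ) : ℝ :=
  (∑ i ∈ Finset.Icc 1 (R.n H h k),
    R.VrefUp (R.L h k i) (h + 1) (R.st (R.L h k i) (h + 1)) ^ 2) / (R.n H h k : ℝ)
    - R.refMeanUp H h k ^ 2

/-- `ν̲^{ref} = σ̲^{ref}/n - (μ̲^{ref}/n)²`. -/
noncomputable def nuRefLo (H h k : ℕ) : ℝ :=
  (∑ i ∈ Finset.Icc 1 (R.n H h k),
    R.VrefLo (R.L h k i) (h + 1) (R.st (R.L h k i) (h + 1)) ^ 2) / (R.n H h k : ℝ)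
    - R.refMeanLo H h k ^ 2

/-- `μ̌̄/ň`: mean of the optimistic advantages over the previous stage. -/
noncomputable def advMeanUp (H h k : ℕ) : ℝ :=
  (∑ i ∈ Finset.Icc 1 (R.nchk H h k),
    (R.Vup (R.Lc H h k i) (h + 1) (R.st (R.Lc H h k i) (h + 1)) -
     R.VrefUp (R.Lc H h k i) (h + 1) (R.st (R.Lc H h k i) (h + 1)))) / (R.nchk H h k : ℝ)

/-- `μ̲̌/ň`: mean of the pessimistic advantages over the previous stage. -/
noncomputable def advMeanLo (H h k : ℕ) : ℝ :=
  (∑ i ∈ Finset.Icc 1 (R.nchk H h k),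
    (R.Vlo (R.Lc H h k i) (h + 1) (R.st (R.Lc H h k i) (h + 1)) -
     R.VrefLo (R.Lc H h k i) (h + 1) (R.st (R.Lc H h k i) (h + 1)))) / (R.nchk H h k : ℝ)

/-- `ν̌̄ = σ̌̄/ň - (μ̌̄/ň)²`. -/
noncomputable def nuChkUp (H h k : ℕ) : ℝ :=
  (∑ i ∈ Finset.Icc 1 (R.nchk H h k),
    (R.Vup (R.Lc H h k i) (h + 1) (R.st (R.Lc H h k i) (h + 1)) -
     R.VrefUp (R.Lc H h k i) (h + 1) (R.st (R.Lc H h k i) (h + 1))) ^ 2) / (R.nchk H h k : ℝ)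
    - R.advMeanUp H h k ^ 2

/-- `ν̲̌ = σ̲̌/ň - (μ̲̌/ň)²`. -/
noncomputable def nuChkLo (H h k : ℕ) : ℝ :=
  (∑ i ∈ Finset.Icc 1 (R.nchk H h k),
    (R.Vlo (R.Lc H h k i) (h + 1) (R.st (R.Lc H h k i) (h + 1)) -
     R.VrefLo (R.Lc H h k i) (h + 1) (R.st (R.Lc H h k i) (h + 1))) ^ 2) / (R.nchk H h k : ℝ)
    - R.advMeanLo H h k ^ 2

/-- the Hoeffding-type bonus `γ = 2√(H²ι/ň)`. -/
noncomputable def gammaB (H : ℕ) (iota : ℝ) (h k : ℕ) : ℝ :=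
  2 * Real.sqrt ((H : ℝ) ^ 2 * iota / (R.nchk H h k : ℝ))

/-- the optimistic variance-based bonus `β̄`. -/
noncomputable def betaUp (H : ℕ) (iota c1 c2 c3 : ℝ) (h k : ℕ) : ℝ :=
  c1 * Real.sqrt (R.nuRefUp H h k * iota / (R.n H h k : ℝ)) +
  c2 * Real.sqrt (R.nuChkUp H h k * iota / (R.nchk H h k : ℝ)) +
  c3 * ((H : ℝ) * iota / (R.n H h k : ℝ) + (H : ℝ) * iota / (R.nchk H h k : ℝ) +
    (H : ℝ) * iota ^ (3 / 4 : ℝ) / (R.n H h k : ℝ) ^ (3 / 4 : ℝ) +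
    (H : ℝ) * iota ^ (3 / 4 : ℝ) / (R.nchk H h k : ℝ) ^ (3 / 4 : ℝ))

/-- the pessimistic variance-based bonus `β̲`. -/
noncomputable def betaLo (H : ℕ) (iota c1 c2 c3 : ℝ) (h k : ℕ) : ℝ :=
  c1 * Real.sqrt (R.nuRefLo H h k * iota / (R.n H h k : ℝ)) +
  c2 * Real.sqrt (R.nuChkLo H h k * iota / (R.nchk H h k : ℝ)) +
  c3 * ((H : ℝ) * iota / (R.n H h k : ℝ) + (H : ℝ) * iota / (R.nchk H h k : ℝ) +
    (H : ℝ) * iota ^ (3 / 4 : ℝ) / (R.n H h k : ℝ) ^ (3 / 4 : ℝ) +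
    (H : ℝ) * iota ^ (3 / 4 : ℝ) / (R.nchk H h k : ℝ) ^ (3 / 4 : ℝ))

section WithFintype

variable [Fintype S] [Fintype A] [Fintype B]

/-- `ψ_{h+1}^k`. -/
noncomputable def psiTerm (Pm : ℕ → S → A → B → S → ℝ) (H K h k : ℕ) : ℝ :=
  Pexp Pm h (R.st k h) (R.aa k h) (R.bb k h) fun s' =>
    (∑ i ∈ Finset.Icc 1 (R.n H h k),
        (R.VrefUp (R.L h k i) (h + 1) s' - R.VrefLo (R.L h k i) (h + 1) s')) / (R.n H h k : ℝ) -
      (R.VrefUp (K + 1) (h + 1) s' - R.VrefLo (K + 1) (h + 1) s')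

/-- `ξ_{h+1}^k`. -/
noncomputable def xiTerm (Pm : ℕ → S → A → B → S → ℝ) (H h k : ℕ) : ℝ :=
  (∑ i ∈ Finset.Icc 1 (R.nchk H h k),
      (Pexp Pm h (R.st k h) (R.aa k h) (R.bb k h)
          (fun s' => R.Vup (R.Lc H h k i) (h + 1) s' - R.Vlo (R.Lc H h k i) (h + 1) s') -
        (R.Vup (R.Lc H h k i) (h + 1) (R.st (R.Lc H h k i) (h + 1)) -
          R.Vlo (R.Lc H h k i) (h + 1) (R.st (R.Lc H h k i) (h + 1))))) / (R.nchk H h k : ℝ)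

/-- `Λ_{h+1}^k = ψ_{h+1}^k + ξ_{h+1}^k + 2β̄_h^k + 2β̲_h^k`. -/
noncomputable def lamTerm (Pm : ℕ → S → A → B → S → ℝ) (H K : ℕ) (iota c1 c2 c3 : ℝ)
    (h k : ℕ) : ℝ :=
  R.psiTerm Pm H K h k + R.xiTerm Pm H h k +
    2 * R.betaUp H iota c1 c2 c3 h k + 2 * R.betaLo H iota c1 c2 c3 h k

/-- `R` is a run of Algorithm 1 (with parameters `H K r ι c₁ c₂ c₃ N₀`): initialization,
stage-end update rules for the optimistic and pessimistic action-value functions, CCE policy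
and value updates, and the min-gap reference-value update. -/
def Valid (H K : ℕ) (r : ℕ → S → A → B → ℝ) (iota c1 c2 c3 : ℝ) (N0 : ℕ) : Prop :=
  (∀ h, 1 ≤ h → h ≤ H → ∀ s a b,
      R.Qup 1 h s a b = (H : ℝ) - h + 1 ∧ R.Qlo 1 h s a b = 0) ∧
  (∀ h, 1 ≤ h → h ≤ H → ∀ s,
      R.Vup 1 h s = (H : ℝ) - h + 1 ∧ R.Vlo 1 h s = 0 ∧
      R.VrefUp 1 h s = (H : ℝ) ∧ R.VrefLo 1 h s = 0) ∧
  (∀ k s, R.Vup k (H + 1) s = 0 ∧ R.Vlo k (H + 1) s = 0 ∧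
      R.VrefUp k (H + 1) s = 0 ∧ R.VrefLo k (H + 1) s = 0) ∧
  (∀ k h s, IsProbVec fun ab : A × B => R.pol k h s ab.1 ab.2) ∧
  (∀ k, 1 ≤ k → k ≤ K → ∀ h, 1 ≤ h → h ≤ H → ∀ s a b,
    (((s, a, b) = R.x k h ∧ IsStageEnd H (Nvis R.x h (k + 1) (R.x k h))) →
      R.Qup (k + 1) h s a b =
        min (min (r h s a b + R.vChkUp H h k + R.gammaB H iota h k)
              (r h s a b + R.refMeanUp H h k + R.advMeanUp H h k +
                R.betaUp H iota c1 c2 c3 h k))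
          (R.Qup k h s a b) ∧
      R.Qlo (k + 1) h s a b =
        max (max (r h s a b + R.vChkLo H h k - R.gammaB H iota h k)
              (r h s a b + R.refMeanLo H h k + R.advMeanLo H h k -
                R.betaLo H iota c1 c2 c3 h k))
          (R.Qlo k h s a b)) ∧
    (¬((s, a, b) = R.x k h ∧ IsStageEnd H (Nvis R.x h (k + 1) (R.x k h))) →
      R.Qup (k + 1) h s a b = R.Qup k h s a b ∧ R.Qlo (k + 1) h s a b = R.Qlo k h s a b)) ∧
  (∀ k, 1 ≤ k → k ≤ K → ∀ h, 1 ≤ h → h ≤ H → ∀ s,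
    ((s = R.st k h ∧ IsStageEnd H (Nvis R.x h (k + 1) (R.x k h))) →
      IsCCE (fun a b => R.pol (k + 1) h s a b) (fun a b => R.Qup (k + 1) h s a b)
        (fun a b => R.Qlo (k + 1) h s a b) ∧
      R.Vup (k + 1) h s = ∑ a, ∑ b, R.pol (k + 1) h s a b * R.Qup (k + 1) h s a b ∧
      R.Vlo (k + 1) h s = ∑ a, ∑ b, R.pol (k + 1) h s a b * R.Qlo (k + 1) h s a b) ∧
    (¬(s = R.st k h ∧ IsStageEnd H (Nvis R.x h (k + 1) (R.x k h))) →
      R.pol (k + 1) h s = R.pol k h s ∧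
      R.Vup (k + 1) h s = R.Vup k h s ∧ R.Vlo (k + 1) h s = R.Vlo k h s)) ∧
  (∀ k, 1 ≤ k → k ≤ K → ∀ h, 1 ≤ h → h ≤ H → ∀ s,
    ((s = R.st k h ∧ NvisS R.st h (k + 1) s = N0) →
      ∃ j, 1 ≤ j ∧ j ≤ k + 1 ∧
        R.VrefUp (k + 1) h s = R.Vup j h s ∧ R.VrefLo (k + 1) h s = R.Vlo j h s ∧
        ∀ j', 1 ≤ j' → j' ≤ k + 1 →
          R.Vup j h s - R.Vlo j h s ≤ R.Vup j' h s - R.Vlo j' h s) ∧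
    (¬(s = R.st k h ∧ NvisS R.st h (k + 1) s = N0) →
      R.VrefUp (k + 1) h s = R.VrefUp k h s ∧ R.VrefLo (k + 1) h s = R.VrefLo k h s))

end WithFintype

end RunData

/-- The probabilistic structure of a run of Algorithm 1 on the Markov game with transition
kernel `Pm`: with respect to the filtration `F` (indexed by the time `(k-1)*(H+1)+h`), the
trajectory is adapted, the next state is sampled from `P_h(·|s_h^k,a_h^k,b_h^k)`, and the
actions are sampled from the CCE policy `π_h^k`. -/
def SampledRun {S A B : Type*} [Fintype S] [Fintype A] [Fintype B]
    [MeasurableSpace S] [MeasurableSpace A] [MeasurableSpace B]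
    {Ω : Type*} [m0 : MeasurableSpace Ω] (P : Measure Ω)
    (H : ℕ) (Pm : ℕ → S → A → B → S → ℝ)
    (Rv : Ω → RunData S A B) (F : Filtration ℕ m0) : Prop :=
  (∀ k h, 1 ≤ k → 1 ≤ h → h ≤ H + 1 →
      @Measurable Ω S (F ((k - 1) * (H + 1) + h)) _ fun ω => (Rv ω).st k h) ∧
  (∀ k h, 1 ≤ k → 1 ≤ h → h ≤ H →
      (@Measurable Ω A (F ((k - 1) * (H + 1) + h)) _ fun ω => (Rv ω).aa k h) ∧
      (@Measurable Ω B (F ((k - 1) * (H + 1) + h)) _ fun ω => (Rv ω).bb k h)) ∧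
  (∀ k h, 1 ≤ k → 1 ≤ h → h ≤ H → ∀ f : S → ℝ,
      (P[(fun ω => f ((Rv ω).st k (h + 1)))|F ((k - 1) * (H + 1) + h)]) =ᵐ[P]
        fun ω => ∑ s', Pm h ((Rv ω).st k h) ((Rv ω).aa k h) ((Rv ω).bb k h) s' * f s') ∧
  (∀ k h, 1 ≤ k → 1 ≤ h → h ≤ H → ∀ f : A → B → ℝ,
      (P[(fun ω => f ((Rv ω).aa k h) ((Rv ω).bb k h))|F ((k - 1) * (H + 1) + h - 1)]) =ᵐ[P]
        fun ω => ∑ a, ∑ b, (Rv ω).pol k h ((Rv ω).st k h) a b * f a b)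


theorem stageLen_succ_le (H i : ℕ) : stageLen H (i + 1) ≤ 2 * stageLen H i := by
  have := Nat.div_le_self (stageLen H i) H
  simp only [stageLen]
  omega

theorem stageEnd_succ (H m : ℕ) : stageEnd H (m + 1) = stageEnd H m + stageLen H m :=
  Finset.sum_range_succ _ _

theorem stageEnd_succ_pos {H : ℕ} (hH : 1 ≤ H) (m : ℕ) : 0 < stageEnd H (m + 1) := by
  induction m with
  | zero => simpa [stageEnd, stageLen] using Nat.pos_of_ne_zero (by omega)
  | succ m ih => rw [stageEnd_succ]; omega

/-- Each ratio `e_{m+1} / (e₁ + ⋯ + e_m)` past the first is controlled by the increment of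
the logarithm of the partial sums. -/
theorem stageLen_div_stageEnd_le {H : ℕ} (hH : 1 ≤ H) (m : ℕ) :
    (stageLen H (m + 2) : ℝ) / stageEnd H (m + 2) ≤
      2 * (Real.log (stageEnd H (m + 2)) - Real.log (stageEnd H (m + 1))) := by
  have h1 : (0 : ℝ) < stageEnd H (m + 1) := by exact_mod_cast stageEnd_succ_pos hH m
  have h2 : (0 : ℝ) < stageEnd H (m + 2) := by exact_mod_cast stageEnd_succ_pos hH (m + 1)
  have hsum : (stageEnd H (m + 2) : ℝ) = stageEnd H (m + 1) + stageLen H (m + 1) := by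
    exact_mod_cast stageEnd_succ H (m + 1)
  have hlen : (stageLen H (m + 2) : ℝ) ≤ 2 * stageLen H (m + 1) := by
    exact_mod_cast stageLen_succ_le H (m + 1)
  have hlog := Real.log_le_sub_one_of_pos (div_pos h1 h2)
  rw [Real.log_div h1.ne' h2.ne'] at hlog
  have hdiv : (stageLen H (m + 2) : ℝ) / stageEnd H (m + 2) ≤
      2 * (1 - stageEnd H (m + 1) / stageEnd H (m + 2)) := by
    rw [one_sub_div h2.ne', ← mul_div_assoc]
    gcongr
    linarith
  linarith

theorem sum_stageLen_div_stageEnd_le {H : ℕ} (hH : 1 ≤ H) (j : ℕ) {T : ℕ} (hT : 1 ≤ T) (n : ℕ) :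
    ∑ z ∈ Finset.Icc 2 (n + 2),
        (if j ≤ stageEnd H (z - 1) ∧ stageEnd H (z - 1) ≤ T then
          (stageLen H (z - 1) : ℝ) / (stageEnd H (z - 1) : ℝ) else 0)
      ≤ 2 * (Real.log (min (stageEnd H (n + 1)) T : ℕ) + 1) := by
  induction n with
  | zero =>
    have hlog : 0 ≤ Real.log (min (stageEnd H (0 + 1)) T : ℕ) := Real.log_natCast_nonneg _
    have hterm : (stageLen H 1 : ℝ) / stageEnd H 1 ≤ 2 := by
      have hpos : (0 : ℝ) < stageEnd H 1 := by exact_mod_cast stageEnd_succ_pos hH 0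
      have hlen : (stageLen H 1 : ℝ) ≤ 2 * stageEnd H 1 := by
        have := stageLen_succ_le H 0
        simp only [stageEnd, Finset.sum_range_one]
        exact_mod_cast this
      rwa [div_le_iff₀ hpos]
    simp only [Nat.zero_add, Finset.Icc_self, Finset.sum_singleton, Nat.add_one_sub_one]
      at hlog ⊢
    split_ifs <;> linarith
  | succ n ih =>
    have hpos := stageEnd_succ_pos hH n
    have hmono : stageEnd H (n + 1) ≤ stageEnd H (n + 2) := by
      rw [stageEnd_succ H (n + 1)]; omega
    have hlog : Real.log (min (stageEnd H (n + 1)) T : ℕ) ≤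
        Real.log (min (stageEnd H (n + 2)) T : ℕ) := by
      apply Real.log_le_log
      · exact_mod_cast lt_min hpos hT
      · exact_mod_cast min_le_min_right T hmono
    rw [show n + 1 + 2 = n + 2 + 1 from rfl, Finset.sum_Icc_succ_top (by omega),
      show n + 2 + 1 - 1 = n + 2 from rfl, show n + 1 + 1 = n + 2 from rfl]
    split_ifs with h
    · rw [min_eq_left (hmono.trans h.2)] at ih
      rw [min_eq_left h.2]
      linarith [stageLen_div_stageEnd_le hH n]
    · linarith

/-- For the stage lengths `e₁ = H`, `e_{i+1} = ⌊(1+1/H)e_i⌋`, and any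
`1 ≤ j ≤ T`, the sum of `e_z / (e₁ + ⋯ + e_{z-1})` over all `z ≥ 2` with
`j ≤ e₁ + ⋯ + e_{z-1} ≤ T` is at most `2 (log T + 1)`.
(Here `stageLen H (z-1) = e_z` and `stageEnd H (z-1) = e₁ + ⋯ + e_{z-1}`; all indices `z`
with a nonzero contribution satisfy `z ≤ T + 1`, so the sum below is the full sum.) -/
theorem statement18 (H : ℕ) (hH : 1 ≤ H) (j T : ℕ) (hj : 1 ≤ j) (hjT : j ≤ T) :
    ∑ z ∈ Finset.Icc 2 (T + 1),
        (if j ≤ stageEnd H (z - 1) ∧ stageEnd H (z - 1) ≤ T then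
          (stageLen H (z - 1) : ℝ) / (stageEnd H (z - 1) : ℝ) else 0)
      ≤ 2 * (Real.log T + 1) := by
  obtain ⟨n, rfl⟩ : ∃ n, T = n + 1 := ⟨T - 1, by omega⟩
  refine (sum_stageLen_div_stageEnd_le hH j (by omega) n).trans ?_
  have hmin : 0 < min (stageEnd H (n + 1)) (n + 1) :=
    lt_min (stageEnd_succ_pos hH n) n.succ_pos
  gcongr
  exact min_le_right _ _

end ZSMG
end

section
/- For any step h ∈ [H] and any nonnegative weights {w_k}_{k=1}^K, the trajectory of Algorithm 1 satisfies Σ_{k=1}^K w_k·γ_h^k ≤ 20√(H²ι)·(1+1/H)·√(‖w‖_∞ · SABH · ‖w‖₁), where γ_h^k = 2√(H²ι/ň_h^k), ‖w‖_∞ = max_{1≤k≤K} w_k, and ‖w‖₁ = Σ_{k=1}^K w_k. (Terms with ň_h^k = 0 are excluded.) -/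
open Finset MeasureTheory

namespace ZSMG

lemma le_stageLen (H i : ℕ) : H ≤ stageLen H i := by
  induction i with
  | zero => exact le_rfl
  | succ i ih => exact ih.trans (Nat.le_add_right _ _)

lemma le_stageEnd {H : ℕ} (hH : 1 ≤ H) (m : ℕ) : m ≤ stageEnd H m := by
  have := Finset.sum_le_sum (s := Finset.range m)
    fun i _ => hH.trans (le_stageLen H i)
  simpa [stageEnd] using this

lemma stageLen_succ_mul_le (H i : ℕ) : stageLen H (i + 1) * H ≤ (H + 1) * stageLen H i := by
  have := Nat.div_mul_le_self (stageLen H i) H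
  simp only [stageLen]
  nlinarith

lemma stageEnd_le {H : ℕ} (hH : 1 ≤ H) (m : ℕ) : stageEnd H m ≤ 2 * H * stageLen H m := by
  induction m with
  | zero => simp [stageEnd]
  | succ m ih =>
    have hdiv : 1 ≤ stageLen H m / H := (Nat.one_le_div_iff hH).mpr (le_stageLen H m)
    have hmod := Nat.div_add_mod (stageLen H m) H
    have hlt := Nat.mod_lt (stageLen H m) hH
    have hend : stageEnd H (m + 1) = stageEnd H m + stageLen H m := Finset.sum_range_succ _ _
    simp only [hend, stageLen]
    nlinarith

lemma lt_stageEnd_curStage {H : ℕ} (hH : 1 ≤ H) (n : ℕ) : n < stageEnd H (curStage H n + 1) :=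
  Nat.sInf_mem (s := {m | n < stageEnd H (m + 1)}) ⟨n, le_stageEnd hH (n + 1)⟩

/-- The number of visits is at most `2H(1+1/H)²` times the length of the previous stage. -/
lemma succ_mul_sq_le_checkCnt {H : ℕ} (hH : 1 ≤ H) {n : ℕ} (hn : checkCnt H n ≠ 0) :
    (n + 1) * H ^ 2 ≤ 2 * H * (H + 1) ^ 2 * checkCnt H n := by
  unfold checkCnt at hn ⊢
  split_ifs at hn ⊢ with h0
  · exact absurd rfl hn
  obtain ⟨m, hm⟩ := Nat.exists_eq_succ_of_ne_zero h0
  have hlt := lt_stageEnd_curStage hH n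
  rw [hm] at hlt ⊢
  calc (n + 1) * H ^ 2 ≤ stageEnd H (m + 1 + 1) * H ^ 2 := Nat.mul_le_mul_right _ hlt
    _ ≤ 2 * H * stageLen H (m + 1 + 1) * H ^ 2 := Nat.mul_le_mul_right _ (stageEnd_le hH _)
    _ = 2 * H * H * (stageLen H (m + 1 + 1) * H) := by ring
    _ ≤ 2 * H * H * ((H + 1) * stageLen H (m + 1)) :=
        Nat.mul_le_mul_left _ (stageLen_succ_mul_le H _)
    _ = 2 * H * (H + 1) * (stageLen H (m + 1) * H) := by ring
    _ ≤ 2 * H * (H + 1) * ((H + 1) * stageLen H m) :=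
        Nat.mul_le_mul_left _ (stageLen_succ_mul_le H _)
    _ = 2 * H * (H + 1) ^ 2 * stageLen H (m + 1 - 1) := by
        rw [Nat.add_sub_cancel]; ring

lemma sqrt_div_checkCnt_le {H : ℕ} (hH : 1 ≤ H) {c : ℝ} (hc : 0 ≤ c) (n : ℕ) :
    Real.sqrt (c / checkCnt H n) ≤
      Real.sqrt c * (Real.sqrt (2 * H) * (1 + 1 / (H : ℝ))) / Real.sqrt (n + 1) := by
  have hH0 : (0 : ℝ) < H := by exact_mod_cast hH
  rcases eq_or_ne (checkCnt H n) 0 with h0 | h0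
  · rw [h0]
    simp only [Nat.cast_zero, div_zero, Real.sqrt_zero]
    positivity
  have hpos : (0 : ℝ) < checkCnt H n := by exact_mod_cast Nat.pos_of_ne_zero h0
  have key : ((n : ℝ) + 1) * (H : ℝ) ^ 2 ≤ 2 * H * ((H : ℝ) + 1) ^ 2 * checkCnt H n := by
    exact_mod_cast succ_mul_sq_le_checkCnt hH h0
  apply Real.sqrt_le_iff.mpr
  refine ⟨by positivity, ?_⟩
  rw [div_pow, mul_pow, mul_pow, Real.sq_sqrt hc, Real.sq_sqrt (by positivity),
    Real.sq_sqrt (by positivity), mul_div_assoc, div_eq_mul_inv c]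
  refine mul_le_mul_of_nonneg_left ?_ hc
  rw [le_div_iff₀ (by positivity), inv_mul_le_iff₀ hpos]
  have hone : (1 + 1 / (H : ℝ)) ^ 2 = ((H : ℝ) + 1) ^ 2 / (H : ℝ) ^ 2 := by
    field_simp
  rw [hone, ← mul_div_assoc, ← mul_div_assoc, le_div_iff₀ (by positivity)]
  linarith

lemma two_sqrt_add_div_sqrt_le {M P w c : ℝ} (hP : 0 ≤ P) (hw : 0 ≤ w) (hwM : w ≤ M)
    (hc : 0 < c) (hle : P + w ≤ M * c) :
    2 * Real.sqrt (M * P) + w / Real.sqrt c ≤ 2 * Real.sqrt (M * (P + w)) := by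
  rcases hw.eq_or_lt with rfl | hw0
  · simp
  have hM : 0 < M := hw0.trans_le hwM
  have hu := Real.sqrt_nonneg (M * P)
  have hu2 := Real.sq_sqrt (mul_nonneg hM.le hP)
  have hv : 0 < Real.sqrt (M * (P + w)) := Real.sqrt_pos.mpr (by positivity)
  have hv2 := Real.sq_sqrt (show 0 ≤ M * (P + w) by positivity)
  have hsc : 0 < Real.sqrt c := Real.sqrt_pos.mpr hc
  have huv : Real.sqrt (M * P) ≤ Real.sqrt (M * (P + w)) :=
    Real.sqrt_le_sqrt (mul_le_mul_of_nonneg_left (by linarith) hM.le)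
  have hvc : Real.sqrt (M * (P + w)) ≤ M * Real.sqrt c := by
    refine Real.sqrt_le_iff.mpr ⟨by positivity, ?_⟩
    rw [mul_pow, Real.sq_sqrt hc.le]
    nlinarith
  have hdiv : w / Real.sqrt c ≤ M * w / Real.sqrt (M * (P + w)) := by
    rw [div_le_div_iff₀ hsc hv]
    nlinarith
  have hgap : M * w / Real.sqrt (M * (P + w)) ≤
      2 * (Real.sqrt (M * (P + w)) - Real.sqrt (M * P)) := by
    rw [div_le_iff₀ hv]
    nlinarith
  linarith

section Visits

variable {S A B : Type*} [DecidableEq S] [DecidableEq A] [DecidableEq B]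

lemma sum_filter_le_mul_Nvis (x : ℕ → ℕ → S × A × B) (h : ℕ) (y : S × A × B)
    {w : ℕ → ℝ} {M : ℝ} {K : ℕ} (hM : ∀ k ∈ Finset.Icc 1 K, w k ≤ M) :
    ∑ k ∈ (Finset.Icc 1 K).filter (fun k => x k h = y), w k ≤ M * Nvis x h (K + 1) y := by
  have := Finset.sum_le_card_nsmul _ w M
    fun k hk => hM k (Finset.mem_of_mem_filter (p := fun k => x k h = y) k hk)
  rw [nsmul_eq_mul, mul_comm] at this
  exact this

lemma sum_div_sqrt_Nvis_le (x : ℕ → ℕ → S × A × B) (h : ℕ) (y : S × A × B)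
    {w : ℕ → ℝ} (hw : ∀ k, 0 ≤ w k) {M : ℝ} (K : ℕ) (hM : ∀ k ∈ Finset.Icc 1 K, w k ≤ M) :
    ∑ k ∈ (Finset.Icc 1 K).filter (fun k => x k h = y),
        w k / Real.sqrt ((Nvis x h k (x k h) : ℝ) + 1) ≤
      2 * Real.sqrt (M * ∑ k ∈ (Finset.Icc 1 K).filter (fun k => x k h = y), w k) := by
  induction K with
  | zero => simp
  | succ K ih =>
    have hIcc : Finset.Icc 1 (K + 1) = insert (K + 1) (Finset.Icc 1 K) :=
      (Finset.insert_Icc_right_eq_Icc_add_one (by omega)).symm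
    have hM' : ∀ k ∈ Finset.Icc 1 K, w k ≤ M := fun k hk =>
      hM k (Finset.Icc_subset_Icc_right K.le_succ hk)
    have hlast : w (K + 1) ≤ M := hM _ (Finset.right_mem_Icc.mpr (by omega))
    rw [hIcc, Finset.filter_insert]
    split_ifs with hy
    · have hnot : K + 1 ∉ (Finset.Icc 1 K).filter fun k => x k h = y := by simp
      rw [Finset.sum_insert hnot, Finset.sum_insert hnot, hy, add_comm,
        add_comm (w (K + 1)) (Finset.sum _ _)]
      refine (add_le_add_left (ih hM') _).trans ?_
      refine two_sqrt_add_div_sqrt_le (Finset.sum_nonneg fun k _ => hw k) (hw _) hlast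
        (by positivity) ?_
      have := sum_filter_le_mul_Nvis x h y hM'
      linarith
    · exact ih hM'

end Visits

lemma sum_sqrt_le_sqrt_card_mul {α : Type*} [Fintype α] {f : α → ℝ} (hf : ∀ i, 0 ≤ f i) :
    ∑ i, Real.sqrt (f i) ≤ Real.sqrt (Fintype.card α * ∑ i, f i) := by
  apply Real.le_sqrt_of_sq_le
  have := sq_sum_le_card_mul_sum_sq (s := Finset.univ) (f := fun i => Real.sqrt (f i))
  simpa [Real.sq_sqrt (hf _)] using this

/-- For any step `h ∈ [H]` and nonnegative weights `w₁,…,w_K`, the weighted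
sum of the Hoeffding bonuses `γ_h^k = 2√(H²ι/ň_h^k)` along any trajectory of Algorithm 1 is
at most `20 √(H²ι) (1+1/H) √(‖w‖_∞ · SABH · ‖w‖₁)`, with `ι = log(2/δ)`.  (Terms with
`ň_h^k = 0` vanish since `√(H²ι/0) = √0 = 0` in Lean.) -/
theorem statement19 {S A B : Type*} [Fintype S] [Fintype A] [Fintype B]
    [DecidableEq S] [DecidableEq A] [DecidableEq B]
    (H K : ℕ) (hH : 1 ≤ H) (hK : 1 ≤ K)
    (δ : ℝ) (hδ0 : 0 < δ) (hδ1 : δ < 1)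
    (x : ℕ → ℕ → S × A × B)
    (h : ℕ) (hh1 : 1 ≤ h) (hhH : h ≤ H)
    (w : ℕ → ℝ) (hw : ∀ k, 0 ≤ w k) :
    ∑ k ∈ Finset.Icc 1 K,
        w k * (2 * Real.sqrt ((H : ℝ) ^ 2 * Real.log (2 / δ) / (nCheck x H h k : ℝ)))
      ≤ 20 * Real.sqrt ((H : ℝ) ^ 2 * Real.log (2 / δ)) * (1 + 1 / (H : ℝ)) *
        Real.sqrt
          (((Finset.Icc 1 K).sup' (Finset.nonempty_Icc.mpr hK) w) *
            ((Fintype.card S : ℝ) * (Fintype.card A : ℝ) * (Fintype.card B : ℝ) * (H : ℝ)) *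
            ∑ k ∈ Finset.Icc 1 K, w k) := by
  set M := (Finset.Icc 1 K).sup' (Finset.nonempty_Icc.mpr hK) w
  set c := (H : ℝ) ^ 2 * Real.log (2 / δ)
  have hM : ∀ k ∈ Finset.Icc 1 K, w k ≤ M := fun k hk => Finset.le_sup' w hk
  have hM0 : 0 ≤ M := (hw 1).trans (hM 1 (Finset.left_mem_Icc.mpr hK))
  have hc : 0 ≤ c :=
    mul_nonneg (sq_nonneg _) (Real.log_nonneg ((one_le_div hδ0).mpr (by linarith)))
  set W : S × A × B → ℝ := fun y => ∑ k ∈ (Finset.Icc 1 K).filter (fun k => x k h = y), w k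
  have hW0 : ∀ y, 0 ≤ W y := fun y => Finset.sum_nonneg fun k _ => hw k
  have hW : ∑ y, W y = ∑ k ∈ Finset.Icc 1 K, w k := Finset.sum_fiberwise _ _ _
  have hvisits : ∑ k ∈ Finset.Icc 1 K, w k / Real.sqrt ((Nvis x h k (x k h) : ℝ) + 1) ≤
      2 * Real.sqrt (Fintype.card (S × A × B) * (M * ∑ k ∈ Finset.Icc 1 K, w k)) := by
    rw [← Finset.sum_fiberwise (Finset.Icc 1 K) (fun k => x k h)]
    calc _ ≤ ∑ y, 2 * Real.sqrt (M * W y) :=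
          Finset.sum_le_sum fun y _ => sum_div_sqrt_Nvis_le x h y hw K hM
      _ = 2 * ∑ y, Real.sqrt (M * W y) := (Finset.mul_sum _ _ _).symm
      _ ≤ 2 * Real.sqrt (Fintype.card (S × A × B) * ∑ y, M * W y) := by
          gcongr
          exact sum_sqrt_le_sqrt_card_mul fun y => mul_nonneg hM0 (hW0 y)
      _ = _ := by rw [← Finset.mul_sum, hW]
  set R := Real.sqrt (M * ((Fintype.card S : ℝ) * (Fintype.card A : ℝ) *
    (Fintype.card B : ℝ) * (H : ℝ)) * ∑ k ∈ Finset.Icc 1 K, w k)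
  have hR : Real.sqrt (2 * H) *
      Real.sqrt (Fintype.card (S × A × B) * (M * ∑ k ∈ Finset.Icc 1 K, w k)) =
        Real.sqrt 2 * R := by
    rw [← Real.sqrt_mul (by positivity), ← Real.sqrt_mul (by positivity)]
    congr 1
    simp only [Fintype.card_prod, Nat.cast_mul]
    ring
  have hsqrt2 : Real.sqrt 2 ≤ 2 := Real.sqrt_le_iff.mpr (by norm_num)
  calc _ ≤ ∑ k ∈ Finset.Icc 1 K, 2 * (Real.sqrt c * (Real.sqrt (2 * H) * (1 + 1 / (H : ℝ)))) *
          (w k / Real.sqrt ((Nvis x h k (x k h) : ℝ) + 1)) := by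
        refine Finset.sum_le_sum fun k _ => ?_
        refine (mul_le_mul_of_nonneg_left (mul_le_mul_of_nonneg_left
          (sqrt_div_checkCnt_le hH hc (Nvis x h k (x k h))) zero_le_two) (hw k)).trans_eq ?_
        ring
    _ ≤ 2 * (Real.sqrt c * (Real.sqrt (2 * H) * (1 + 1 / (H : ℝ)))) *
          (2 * Real.sqrt (Fintype.card (S × A × B) * (M * ∑ k ∈ Finset.Icc 1 K, w k))) := by
        rw [← Finset.mul_sum]
        gcongr
    _ = 4 * Real.sqrt 2 * (Real.sqrt c * (1 + 1 / (H : ℝ)) * R) := by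
        linear_combination 4 * Real.sqrt c * (1 + 1 / (H : ℝ)) * hR
    _ ≤ 20 * (Real.sqrt c * (1 + 1 / (H : ℝ)) * R) := by
        gcongr
        linarith
    _ = _ := by ring

end ZSMG
end
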